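/- G₂ cancellation (the consistency of the scattering diagram for X_{IV} in Section 7 of the paper): the composite 𝒦_{(0,−1),3} ∘ 𝒦_{(1,0),1} ∘ 𝒦_{(1,1),3} ∘ 𝒦_{(2,3),1} ∘ 𝒦_{(1,2),3} ∘ 𝒦_{(1,3),1} ∘ 𝒦_{(0,1),3} ∘ 𝒦_{(−1,0),1} of the eight wall-crossing automorphisms of K = ℂ(x,y) (with wall function (1+z^{γ_i}) for i odd and (1+z^{γ_i})³ for i even, where γ₁ = (−1,0), γ₂ = (0,1), γ₃ = (1,3), γ₄ = (1,2), γ₅ = (2,3), γ₆ = (1,1), γ₇ = (1,0), γ₈ = (0,−1)) sends x ↦ xy³ and y ↦ x^{−1}y^{−2}; equivalently it sends z^μ ↦ z^{M^{−1}μ} for every μ ∈ ℤ², where M : ℤ² → ℤ² is the monodromy with M(1,0) = (−2,−3) and M(0,1) = (1,1). -/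

import Mathlib

open MvPolynomial

noncomputable section

/-- `K = ℂ(x,y)`, the field of rational functions in two variables over `ℂ`. -/
abbrev K : Type := FractionRing (MvPolynomial (Fin 2) ℂ)

/-- The rational function `x`. -/
noncomputable def xx : K := algebraMap (MvPolynomial (Fin 2) ℂ) K (X 0)

/-- The rational function `y`. -/
noncomputable def yy : K := algebraMap (MvPolynomial (Fin 2) ℂ) K (X 1)

/-- `z^μ = x^m y^n` for `μ = (m,n) ∈ ℤ²`. -/
noncomputable def zmon (μ : ℤ × ℤ) : K := xx ^ μ.1 * yy ^ μ.2

/-- `⟨μ,γ⟩ = m b − n a` for `μ = (m,n)`, `γ = (a,b)`. -/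
def pairing (μ γ : ℤ × ℤ) : ℤ := μ.1 * γ.2 - μ.2 * γ.1

/-- `Φ` is the wall-crossing transformation `𝒦_{γ,d}`: the `ℂ`-algebra automorphism of `K`
satisfying `𝒦_{γ,d}(z^μ) = z^μ (1+z^γ)^{d⟨μ,γ⟩}` for all `μ ∈ ℤ²`. -/
def IsWallCrossing (d : ℤ) (γ : ℤ × ℤ) (Φ : K ≃ₐ[ℂ] K) : Prop :=
  ∀ μ : ℤ × ℤ, Φ (zmon μ) = zmon μ * (1 + zmon γ) ^ (d * pairing μ γ)

/-!
Order the walls as `γ₁, γ₂, …` from the outermost factor inwards, so that `γₙ + γₙ₊₂ = dₙ γₙ₊₁`, and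
let `wₙ` be the image of `z^{-γₙ}` under the composite of the first `n` wall-crossings. The
wall-crossing formula becomes the rank 2 Y-system `wₙ wₙ₊₂ = (1 + wₙ₊₁) ^ dₙ`, and for
`d = 3, 1, 3, 1, …` (type G₂) this recurrence has period 8 (Zamolodchikov periodicity): both `wₙ`
and `wₙ₊₈` are given by one expression in `wₙ₊₃, wₙ₊₄, wₙ₊₅` that is symmetric under reflection in
the midpoint `n + 4`. Hence the composite of eight walls sends `z^{γ₈}, z^{γ₉}` to
`z^{γ₀}, z^{γ₁}`, which determines it on all monomials.
-/

section YSystem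

lemma g2_mul_sq_eq_cube {R : Type*} [CommRing R] [IsDomain R] {x₀ x₁ x₂ x₃ x₄ x₅ : R}
    (hx₁ : x₁ ≠ 0) (hx₂ : x₂ ≠ 0) (hx₃ : x₃ ≠ 0)
    (h₀ : x₀ * x₂ = 1 + x₁) (h₁ : x₁ * x₃ = (1 + x₂) ^ 3)
    (h₂ : x₂ * x₄ = 1 + x₃) (h₃ : x₃ * x₅ = (1 + x₄) ^ 3) :
    x₅ * x₁ ^ 2 = (x₀ + x₂ + 2) ^ 3 := by
  have factor : x₁ * (1 + x₄) = (1 + x₂) * (x₀ + x₂ + 2) := by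
    apply mul_left_cancel₀ hx₂
    linear_combination x₁ * h₂ + h₁ - (1 + x₂) * h₀
  apply mul_left_cancel₀ (mul_ne_zero hx₁ hx₃)
  calc x₁ * x₃ * (x₅ * x₁ ^ 2) = (x₁ * (1 + x₄)) ^ 3 := by rw [mul_pow, ← h₃]; ring
    _ = x₁ * x₃ * (x₀ + x₂ + 2) ^ 3 := by rw [factor, mul_pow, h₁]

lemma g2_mul_sq_eq_linear {R : Type*} [CommRing R] [IsDomain R] {x₀ x₁ x₂ x₃ x₄ x₅ : R}
    (hx₁ : x₁ ≠ 0) (hx₂ : x₂ ≠ 0) (hx₃ : x₃ ≠ 0)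
    (h₀ : x₀ * x₂ = (1 + x₁) ^ 3) (h₁ : x₁ * x₃ = 1 + x₂)
    (h₂ : x₂ * x₄ = (1 + x₃) ^ 3) (h₃ : x₃ * x₅ = 1 + x₄) :
    x₅ * x₁ ^ 2 = x₀ + x₂ + 3 * x₁ + 2 := by
  have expand : x₁ ^ 3 * (x₂ * x₄) = (1 + x₁ + x₂) ^ 3 := by
    rw [h₂, ← mul_pow, mul_add, mul_one, h₁, add_left_comm, add_assoc]
  have factor : x₁ ^ 3 * x₂ * (1 + x₄) = (1 + x₂) * x₂ * (x₀ + x₂ + 3 * x₁ + 2) := by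
    linear_combination expand - (1 + x₂) * h₀
  apply mul_left_cancel₀ (mul_ne_zero (mul_ne_zero hx₁ hx₂) hx₃)
  calc x₁ * x₂ * x₃ * (x₅ * x₁ ^ 2) = x₁ ^ 3 * x₂ * (1 + x₄) := by rw [← h₃]; ring
    _ = x₁ * x₂ * x₃ * (x₀ + x₂ + 3 * x₁ + 2) := by rw [factor, ← h₁]; ring

variable {F : Type*} [Field F]

/-- The first `N` relations of the rank 2 Y-system with exponents `d`, which is the recurrence
satisfied by the coefficients under alternating mutations of a rank 2 cluster algebra. -/
def IsYSystem (d : ℕ → ℤ) (N : ℕ) (w : ℕ → F) : Prop :=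
  ∀ n < N, w n * w (n + 2) = (1 + w (n + 1)) ^ d n

/-- The exponents `3, 1, 3, 1, …` of the Y-system of type G₂. -/
def g2Exponent (n : ℕ) : ℤ := if Even n then 3 else 1

namespace IsYSystem

variable {N n : ℕ} {w : ℕ → F}

lemma g2_even (h : IsYSystem g2Exponent N w) (hn : n < N) (heven : Even n) :
    w n * w (n + 2) = (1 + w (n + 1)) ^ 3 := by
  rw [h n hn, g2Exponent, if_pos heven, zpow_ofNat]

lemma g2_odd (h : IsYSystem g2Exponent N w) (hn : n < N) (hodd : Odd n) :
    w n * w (n + 2) = 1 + w (n + 1) := by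
  rw [h n hn, g2Exponent, if_neg (Nat.not_even_iff_odd.2 hodd), zpow_one]

theorem g2_periodic_of_even (h : IsYSystem g2Exponent N w) (hw : ∀ m < N, w m ≠ 0)
    (hn : n + 6 < N) (heven : Even n) : w (n + 8) = w n := by
  have ne (k : ℕ) (hk : k < 7 := by decide) : w (n + k) ≠ 0 := hw _ (by lia)
  have r₀ : w n * w (n + 2) = (1 + w (n + 1)) ^ 3 := h.g2_even (by lia) heven
  have r₁ : w (n + 1) * w (n + 3) = 1 + w (n + 2) := h.g2_odd (by lia) (by grind)
  have r₂ : w (n + 2) * w (n + 4) = (1 + w (n + 3)) ^ 3 := h.g2_even (by lia) (by grind)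
  have r₃ : w (n + 3) * w (n + 5) = 1 + w (n + 4) := h.g2_odd (by lia) (by grind)
  have r₄ : w (n + 4) * w (n + 6) = (1 + w (n + 5)) ^ 3 := h.g2_even (by lia) (by grind)
  have r₅ : w (n + 5) * w (n + 7) = 1 + w (n + 6) := h.g2_odd (by lia) (by grind)
  have r₆ : w (n + 6) * w (n + 8) = (1 + w (n + 7)) ^ 3 := h.g2_even (by lia) (by grind)
  rw [mul_comm] at r₀ r₁ r₂
  apply mul_right_cancel₀ (pow_ne_zero 2 (ne 4))
  calc w (n + 8) * w (n + 4) ^ 2 = (w (n + 3) + w (n + 5) + 2) ^ 3 :=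
        g2_mul_sq_eq_cube (ne 4) (ne 5) (ne 6) r₃ r₄ r₅ r₆
    _ = (w (n + 5) + w (n + 3) + 2) ^ 3 := by rw [add_comm (w (n + 3))]
    _ = w n * w (n + 4) ^ 2 :=
        (g2_mul_sq_eq_cube (ne 4) (ne 3) (ne 2) (by rw [mul_comm, r₃]) r₂ r₁ r₀).symm

theorem g2_periodic_of_odd (h : IsYSystem g2Exponent N w) (hw : ∀ m < N, w m ≠ 0)
    (hn : n + 6 < N) (hodd : Odd n) : w (n + 8) = w n := by
  have ne (k : ℕ) (hk : k < 7 := by decide) : w (n + k) ≠ 0 := hw _ (by lia)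
  have r₀ : w n * w (n + 2) = 1 + w (n + 1) := h.g2_odd (by lia) hodd
  have r₁ : w (n + 1) * w (n + 3) = (1 + w (n + 2)) ^ 3 := h.g2_even (by lia) (by grind)
  have r₂ : w (n + 2) * w (n + 4) = 1 + w (n + 3) := h.g2_odd (by lia) (by grind)
  have r₃ : w (n + 3) * w (n + 5) = (1 + w (n + 4)) ^ 3 := h.g2_even (by lia) (by grind)
  have r₄ : w (n + 4) * w (n + 6) = 1 + w (n + 5) := h.g2_odd (by lia) (by grind)
  have r₅ : w (n + 5) * w (n + 7) = (1 + w (n + 6)) ^ 3 := h.g2_even (by lia) (by grind)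
  have r₆ : w (n + 6) * w (n + 8) = 1 + w (n + 7) := h.g2_odd (by lia) (by grind)
  rw [mul_comm] at r₀ r₁ r₂
  apply mul_right_cancel₀ (pow_ne_zero 2 (ne 4))
  calc w (n + 8) * w (n + 4) ^ 2 = w (n + 3) + w (n + 5) + 3 * w (n + 4) + 2 :=
        g2_mul_sq_eq_linear (ne 4) (ne 5) (ne 6) r₃ r₄ r₅ r₆
    _ = w (n + 5) + w (n + 3) + 3 * w (n + 4) + 2 := by rw [add_comm (w (n + 3))]
    _ = w n * w (n + 4) ^ 2 :=
        (g2_mul_sq_eq_linear (ne 4) (ne 3) (ne 2) (by rw [mul_comm, r₃]) r₂ r₁ r₀).symm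

theorem g2_periodic (h : IsYSystem g2Exponent N w) (hw : ∀ m < N, w m ≠ 0) (hn : n + 6 < N) :
    w (n + 8) = w n :=
  n.even_or_odd.elim (h.g2_periodic_of_even hw hn) (h.g2_periodic_of_odd hw hn)

end IsYSystem

end YSystem

lemma xx_ne_zero : xx ≠ 0 :=
  (map_ne_zero_iff _ (IsFractionRing.injective (MvPolynomial (Fin 2) ℂ) K)).2 (X_ne_zero 0)

lemma yy_ne_zero : yy ≠ 0 :=
  (map_ne_zero_iff _ (IsFractionRing.injective (MvPolynomial (Fin 2) ℂ) K)).2 (X_ne_zero 1)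

lemma zmon_ne_zero (μ : ℤ × ℤ) : zmon μ ≠ 0 :=
  mul_ne_zero (zpow_ne_zero _ xx_ne_zero) (zpow_ne_zero _ yy_ne_zero)

lemma zmon_add (μ ν : ℤ × ℤ) : zmon (μ + ν) = zmon μ * zmon ν := by
  simp only [zmon, Prod.fst_add, Prod.snd_add, zpow_add₀ xx_ne_zero, zpow_add₀ yy_ne_zero]
  ring

lemma zmon_zsmul (n : ℤ) (μ : ℤ × ℤ) : zmon (n • μ) = zmon μ ^ n := by
  simp only [zmon, Prod.smul_fst, Prod.smul_snd, smul_eq_mul, mul_zpow, ← zpow_mul, mul_comm n]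

lemma zmon_neg (μ : ℤ × ℤ) : zmon (-μ) = (zmon μ)⁻¹ := by
  rw [← neg_one_zsmul, zmon_zsmul, zpow_neg_one]

lemma pairing_neg_left (μ γ : ℤ × ℤ) : pairing (-μ) γ = -pairing μ γ := by
  simp only [pairing, Prod.fst_neg, Prod.snd_neg]
  ring

lemma pairing_swap (μ γ : ℤ × ℤ) : pairing μ γ = -pairing γ μ := by
  simp only [pairing]
  ring

lemma pairing_self (γ : ℤ × ℤ) : pairing γ γ = 0 := by
  simp only [pairing]
  ring

lemma pairing_eq_of_add_eq_zsmul {γ δ δ' : ℤ × ℤ} {d : ℤ} (h : δ + δ' = d • γ) :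
    pairing γ δ' = pairing δ γ := by
  obtain rfl : δ' = d • γ - δ := eq_sub_of_add_eq' h
  simp only [pairing, Prod.fst_sub, Prod.snd_sub, Prod.smul_fst, Prod.smul_snd, smul_eq_mul]
  ring

namespace IsWallCrossing

variable {d : ℤ} {γ : ℤ × ℤ} {Φ : K ≃ₐ[ℂ] K}

lemma map_zmon_neg_self (h : IsWallCrossing d γ Φ) : Φ (zmon (-γ)) = zmon (-γ) := by
  rw [h, pairing_neg_left, pairing_self, neg_zero, mul_zero, zpow_zero, mul_one]

theorem exchange (h : IsWallCrossing d γ Φ) {δ δ' : ℤ × ℤ} (hsum : δ + δ' = d • γ)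
    (hpair : pairing δ γ = 1) : zmon (-δ) * Φ (zmon (-δ')) = (1 + zmon (-γ)) ^ d := by
  have hpair' : pairing (-δ') γ = 1 := by
    rw [pairing_neg_left, ← pairing_swap, pairing_eq_of_add_eq_zsmul hsum, hpair]
  calc zmon (-δ) * Φ (zmon (-δ'))
      = zmon (-δ + -δ') * (1 + zmon γ) ^ d := by rw [h, hpair', mul_one, zmon_add, mul_assoc]
    _ = zmon (d • -γ) * (1 + zmon γ) ^ d := by rw [← neg_add, hsum, smul_neg]
    _ = (zmon (-γ) * (1 + zmon γ)) ^ d := by rw [zmon_zsmul, mul_zpow]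
    _ = (1 + zmon (-γ)) ^ d := by
      rw [mul_add, mul_one, zmon_neg, inv_mul_cancel₀ (zmon_ne_zero γ), add_comm]

end IsWallCrossing

/-- A list of wall-crossings, outermost factor of the composite first. Their directions
`γ 1, γ 2, …` turn so that consecutive ones form an oriented basis of `ℤ²` and `γ n + γ (n + 2)` is
the multiple `d n • γ (n + 1)`. The vectors `γ 0` and `γ (l.length + 1)`, which belong to no wall in
`l`, continue this pattern at both ends. -/
structure IsWallChain (d : ℕ → ℤ) (γ : ℕ → ℤ × ℤ) (l : List (K ≃ₐ[ℂ] K)) : Prop where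
  isWallCrossing : ∀ n (hn : n < l.length), IsWallCrossing (d n) (γ (n + 1)) l[n]
  add_eq_zsmul : ∀ n < l.length, γ n + γ (n + 2) = d n • γ (n + 1)
  pairing_zero_one : pairing (γ 0) (γ 1) = 1

/-- The image of `z^{-γ n}` under the composite of the first `n` automorphisms in `l`, which is a
solution of the Y-system when `l` is a chain of walls. Beyond the length of `l` the composite of
all of `l` is used. -/
def ySeq (γ : ℕ → ℤ × ℤ) (l : List (K ≃ₐ[ℂ] K)) (n : ℕ) : K :=
  (l.take n).prod (zmon (-γ n))

lemma ySeq_ne_zero (γ : ℕ → ℤ × ℤ) (l : List (K ≃ₐ[ℂ] K)) (n : ℕ) : ySeq γ l n ≠ 0 :=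
  (map_ne_zero _).2 (zmon_ne_zero _)

namespace IsWallChain

variable {d : ℕ → ℤ} {γ : ℕ → ℤ × ℤ} {l : List (K ≃ₐ[ℂ] K)}

lemma pairing_succ (h : IsWallChain d γ l) {n : ℕ} (hn : n ≤ l.length) :
    pairing (γ n) (γ (n + 1)) = 1 := by
  induction n with
  | zero => exact h.pairing_zero_one
  | succ n ih => rw [pairing_eq_of_add_eq_zsmul (h.add_eq_zsmul n hn), ih (Nat.le_of_succ_le hn)]

lemma ySeq_succ (h : IsWallChain d γ l) (n : ℕ) :
    ySeq γ l (n + 1) = (l.take n).prod (zmon (-γ (n + 1))) := by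
  rcases lt_or_ge n l.length with hn | hn
  · rw [ySeq, List.prod_take_succ _ _ hn, AlgEquiv.mul_apply,
      (h.isWallCrossing n hn).map_zmon_neg_self]
  · rw [ySeq, List.take_of_length_le hn, List.take_of_length_le (Nat.le_succ_of_le hn)]

theorem isYSystem (h : IsWallChain d γ l) : IsYSystem d l.length (ySeq γ l) := by
  intro n hn
  have exchange := (h.isWallCrossing n hn).exchange (h.add_eq_zsmul n hn) (h.pairing_succ hn.le)
  rw [h.ySeq_succ (n + 1), h.ySeq_succ n, ySeq, List.prod_take_succ _ _ hn, AlgEquiv.mul_apply,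
    ← map_mul, exchange, map_zpow₀, map_add, map_one]

theorem g2_prod_zmon (h : IsWallChain g2Exponent γ l) (hl : l.length = 8) (a b : ℤ) :
    l.prod (zmon (a • γ 8 + b • γ 9)) = zmon (a • γ 0 + b • γ 1) := by
  have periodic {n : ℕ} (hn : n + 6 < l.length) : ySeq γ l (n + 8) = ySeq γ l n :=
    h.isYSystem.g2_periodic (fun m _ ↦ ySeq_ne_zero γ l m) hn
  have take_all {n : ℕ} (hn : 8 ≤ n) : l.take n = l := List.take_of_length_le (hl.trans_le hn)
  have map₈ : l.prod (zmon (γ 8)) = zmon (γ 0) := by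
    simpa only [ySeq, take_all le_rfl, List.take_zero, List.prod_nil, AlgEquiv.one_apply, zmon_neg,
      map_inv₀, inv_inj] using periodic (n := 0) (by lia)
  have map₉ : l.prod (zmon (γ 9)) = zmon (γ 1) := by
    have period := periodic (n := 1) (by lia)
    rw [h.ySeq_succ 0] at period
    simpa only [ySeq, take_all (Nat.le_succ 8), List.take_zero, List.prod_nil, AlgEquiv.one_apply,
      zmon_neg, map_inv₀, inv_inj] using period
  simp only [zmon_add, zmon_zsmul, map_mul, map_zpow₀, map₈, map₉]

end IsWallChain

/-- The directions of the G₂ walls, in reverse order: `g2Ray n` is `γ_{9-n}` in the notation of the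
theorem, so that index `1` belongs to the outermost factor. -/
def g2Ray : ℕ → ℤ × ℤ
  | 0 => (-1, -3)
  | 1 => (0, -1)
  | n + 2 => g2Exponent n • g2Ray (n + 1) - g2Ray n

/-- G₂ cancellation: the composite
`𝒦_{(0,−1),3} ∘ 𝒦_{(1,0),1} ∘ 𝒦_{(1,1),3} ∘ 𝒦_{(2,3),1} ∘ 𝒦_{(1,2),3} ∘ 𝒦_{(1,3),1} ∘ 𝒦_{(0,1),3} ∘ 𝒦_{(−1,0),1}`
sends `z^μ ↦ z^{M⁻¹μ}` for every `μ ∈ ℤ²`, where `M(1,0) = (−2,−3)`, `M(0,1) = (1,1)`,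
so `M⁻¹(m,n) = (m−n, 3m−2n)`; in particular `x ↦ xy³` and `y ↦ x⁻¹y⁻²`. -/
theorem G2_cancellation
    (K1 K2 K3 K4 K5 K6 K7 K8 : K ≃ₐ[ℂ] K)
    (h1 : IsWallCrossing 1 (-1, 0) K1) (h2 : IsWallCrossing 3 (0, 1) K2)
    (h3 : IsWallCrossing 1 (1, 3) K3) (h4 : IsWallCrossing 3 (1, 2) K4)
    (h5 : IsWallCrossing 1 (2, 3) K5) (h6 : IsWallCrossing 3 (1, 1) K6)
    (h7 : IsWallCrossing 1 (1, 0) K7) (h8 : IsWallCrossing 3 (0, -1) K8) :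
    ∀ μ : ℤ × ℤ, K8 (K7 (K6 (K5 (K4 (K3 (K2 (K1 (zmon μ)))))))) =
      zmon (μ.1 - μ.2, 3 * μ.1 - 2 * μ.2) := by
  intro μ
  have chain : IsWallChain g2Exponent g2Ray [K8, K7, K6, K5, K4, K3, K2, K1] :=
    { isWallCrossing := fun n (hn : n < 8) ↦ by
        interval_cases n
        exacts [h8, h7, h6, h5, h4, h3, h2, h1]
      add_eq_zsmul := fun n _ ↦ add_sub_cancel _ _
      pairing_zero_one := rfl }
  have source : (μ.2 - μ.1) • g2Ray 8 + (-μ.2) • g2Ray 9 = μ := by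
    rw [show g2Ray 8 = (-1, 0) from rfl, show g2Ray 9 = (-1, -1) from rfl]
    ext <;> simp
  have target : (μ.2 - μ.1) • g2Ray 0 + (-μ.2) • g2Ray 1 = (μ.1 - μ.2, 3 * μ.1 - 2 * μ.2) := by
    rw [g2Ray, g2Ray]
    ext <;> simp
    ring
  have monodromy := chain.g2_prod_zmon rfl (μ.2 - μ.1) (-μ.2)
  rwa [source, target] at monodromy

end
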